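/- For every c ∈ ℂ, the entire function f(w) := ₀𝐅₁(c; w) satisfies the ₀F₁ equation: w·f''(w) + c·f'(w) − f(w) = 0 for all w ∈ ℂ. -/

import Mathlib

open Complex

/-- Olver-normalized hypergeometric function `₀𝐅₁(c; w) = ∑ wⁿ/(n! Γ(c+n))`. -/
noncomputable def zeroF1reg (c w : ℂ) : ℂ :=
  ∑' n : ℕ, w ^ n / ((n.factorial : ℂ) * Complex.Gamma (c + n))

lemma aux_summable (a : ℕ → ℂ) (M : ℝ) (ha : ∀ n, ‖a n‖ ≤ M) (w : ℂ) :
    Summable (fun n : ℕ => w ^ n / (n.factorial : ℂ) * a n) := by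
  refine Summable.of_norm_bounded
    (g := fun n : ℕ => ‖w‖ ^ n / (n.factorial : ℝ) * M)
    ((Real.summable_pow_div_factorial ‖w‖).mul_right M) ?_
  intro n
  rw [norm_mul, norm_div, norm_pow, Complex.norm_natCast]
  exact mul_le_mul_of_nonneg_left (ha n) (by positivity)

lemma aux_term (n : ℕ) (w : ℂ) :
    ((n + 1 : ℕ) : ℂ) * w ^ n / ((n + 1).factorial : ℂ) = w ^ n / (n.factorial : ℂ) := by
  have h1 : (n.factorial : ℂ) ≠ 0 := by exact_mod_cast n.factorial_ne_zero
  have h2 : ((n : ℂ) + 1) ≠ 0 := by exact_mod_cast n.succ_ne_zero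
  rw [Nat.factorial_succ]
  push_cast
  field_simp

lemma aux_deriv (a : ℕ → ℂ) (M : ℝ) (ha : ∀ n, ‖a n‖ ≤ M) (w : ℂ) :
    HasDerivAt (fun w : ℂ => ∑' n : ℕ, w ^ n / (n.factorial : ℂ) * a n)
      (∑' n : ℕ, w ^ n / (n.factorial : ℂ) * a (n + 1)) w := by
  set R : ℝ := ‖w‖ + 1 with hR
  have hR0 : 0 < R := by positivity
  have hu : Summable (fun n : ℕ => (n : ℝ) * R ^ (n - 1) / (n.factorial : ℝ) * M) := by
    rw [← summable_nat_add_iff 1]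
    refine ((Real.summable_pow_div_factorial R).mul_right M).congr ?_
    intro n
    congr 1
    have h2 : ((n : ℝ) + 1) ≠ 0 := by positivity
    rw [Nat.factorial_succ]
    push_cast
    field_simp
  have hw : w ∈ Metric.ball (0 : ℂ) R := by simp [hR]
  have key := hasDerivAt_tsum_of_isPreconnected (𝕜 := ℂ)
    (g := fun (n : ℕ) (w : ℂ) => w ^ n / (n.factorial : ℂ) * a n)
    (g' := fun (n : ℕ) (w : ℂ) => (n : ℂ) * w ^ (n - 1) / (n.factorial : ℂ) * a n)
    (t := Metric.ball (0 : ℂ) R) (y₀ := w) (y := w) hu Metric.isOpen_ball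
    (convex_ball (0 : ℂ) R).isPreconnected
    (fun n y _ => ((hasDerivAt_pow n y).div_const _).mul_const _)
    (by
      intro n y hy
      have hy' : ‖y‖ ≤ R := by simpa using (Metric.mem_ball.1 hy).le
      rw [norm_mul, norm_div, norm_mul, norm_pow, Complex.norm_natCast, Complex.norm_natCast]
      gcongr
      exact ha n)
    hw (aux_summable a M ha w) hw
  have hs : Summable (fun n : ℕ => (n : ℂ) * w ^ (n - 1) / (n.factorial : ℂ) * a n) := by
    rw [← summable_nat_add_iff 1]
    refine (aux_summable (fun n => a (n + 1)) M (fun n => ha _) w).congr ?_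
    intro n
    simp only [Nat.add_sub_cancel]
    rw [aux_term]
  have he : ∑' n : ℕ, (n : ℂ) * w ^ (n - 1) / (n.factorial : ℂ) * a n =
      ∑' n : ℕ, w ^ n / (n.factorial : ℂ) * a (n + 1) := by
    rw [hs.tsum_eq_zero_add]
    simp only [Nat.add_sub_cancel, aux_term]
    simp
  rw [← he]
  exact key

lemma aux_rec (c : ℂ) (n : ℕ) :
    (Gamma (c + n))⁻¹ = (c + n) * (Gamma (c + (n + 1 : ℕ)))⁻¹ := by
  rw [Complex.one_div_Gamma_eq_self_mul_one_div_Gamma_add_one]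
  push_cast
  rw [add_assoc]

lemma aux_bdd (c : ℂ) : ∃ M : ℝ, ∀ n : ℕ, ‖(Gamma (c + n))⁻¹‖ ≤ M := by
  obtain ⟨N, hN⟩ := exists_nat_ge (‖c‖ + 1)
  have hstep : ∀ n, N ≤ n →
      ‖(Gamma (c + (n + 1 : ℕ)))⁻¹‖ ≤ ‖(Gamma (c + n))⁻¹‖ := by
    intro n hn
    rw [aux_rec c n, norm_mul]
    have h1 : 1 ≤ ‖c + n‖ := by
      have h := norm_sub_le (c + n) c
      rw [add_sub_cancel_left, Complex.norm_natCast] at h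
      have : (N : ℝ) ≤ n := by exact_mod_cast hn
      linarith
    exact le_mul_of_one_le_left (norm_nonneg _) h1
  have hlate : ∀ n, N ≤ n → ‖(Gamma (c + n))⁻¹‖ ≤ ‖(Gamma (c + N))⁻¹‖ := by
    intro n hn
    induction n, hn using Nat.le_induction with
    | base => exact le_rfl
    | succ n hn ih => exact (hstep n hn).trans ih
  refine ⟨∑ k ∈ Finset.range (N + 1), ‖(Gamma (c + k))⁻¹‖, fun n => ?_⟩
  have hsing : ∀ k, k ≤ N → ‖(Gamma (c + k))⁻¹‖ ≤
      ∑ k ∈ Finset.range (N + 1), ‖(Gamma (c + k))⁻¹‖ := fun k hk =>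
    Finset.single_le_sum (f := fun k : ℕ => ‖(Gamma (c + k))⁻¹‖)
      (fun i _ => norm_nonneg _) (Finset.mem_range.2 (by omega))
  rcases le_total n N with h | h
  · exact hsing n h
  · exact (hlate n h).trans (hsing N le_rfl)

lemma aux_eq (c w : ℂ) :
    zeroF1reg c w = ∑' n : ℕ, w ^ n / (n.factorial : ℂ) * (Gamma (c + n))⁻¹ := by
  unfold zeroF1reg
  refine tsum_congr fun n => ?_
  rw [← div_div, div_eq_mul_inv (w ^ n / _)]

lemma aux_hasDeriv (c w : ℂ) :
    HasDerivAt (fun w : ℂ => zeroF1reg c w) (zeroF1reg (c + 1) w) w := by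
  obtain ⟨M, hM⟩ := aux_bdd c
  have h := aux_deriv (fun n => (Gamma (c + n))⁻¹) M hM w
  have he : zeroF1reg (c + 1) w =
      ∑' n : ℕ, w ^ n / (n.factorial : ℂ) * (Gamma (c + (n + 1 : ℕ)))⁻¹ := by
    rw [aux_eq]
    refine tsum_congr fun n => ?_
    rw [show c + ((n + 1 : ℕ) : ℂ) = c + 1 + n by push_cast; ring]
  rw [he]
  simp only [aux_eq]
  exact h

/-- for every `c ∈ ℂ`, the entire function `f(w) = ₀𝐅₁(c; w)` satisfies the
`₀F₁` equation `w f''(w) + c f'(w) - f(w) = 0` for all `w ∈ ℂ`. -/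
theorem zeroF1reg_satisfies_zeroF1_equation (c : ℂ) :
    Differentiable ℂ (fun w : ℂ => zeroF1reg c w) ∧
    ∀ w : ℂ,
      w * deriv (deriv (fun w : ℂ => zeroF1reg c w)) w +
        c * deriv (fun w : ℂ => zeroF1reg c w) w - zeroF1reg c w = 0 := by
  refine ⟨fun w => (aux_hasDeriv c w).differentiableAt, fun w => ?_⟩
  have hd : ∀ c : ℂ, deriv (fun w : ℂ => zeroF1reg c w) = fun w => zeroF1reg (c + 1) w :=
    fun c => funext fun w => (aux_hasDeriv c w).deriv
  rw [hd, hd]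
  simp only [aux_eq]
  obtain ⟨M1, hM1⟩ := aux_bdd (c + 1)
  obtain ⟨M2, hM2⟩ := aux_bdd (c + 1 + 1)
  have s1 := aux_summable _ M1 hM1 w
  have s2 := aux_summable _ M2 hM2 w
  have e : ∀ n : ℕ, w * (w ^ n / (n.factorial : ℂ) * (Gamma (c + 1 + 1 + n))⁻¹) =
      ((n + 1 : ℕ) : ℂ) * (w ^ (n + 1) / ((n + 1).factorial : ℂ) *
        (Gamma (c + 1 + (n + 1 : ℕ)))⁻¹) := by
    intro n
    rw [← aux_term, show c + 1 + 1 + (n : ℂ) = c + 1 + (n + 1 : ℕ) by push_cast; ring]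
    ring
  have s3 : Summable (fun n : ℕ => (n : ℂ) * (w ^ n / (n.factorial : ℂ) *
      (Gamma (c + 1 + n))⁻¹)) := by
    rw [← summable_nat_add_iff 1]
    exact (s2.mul_left w).congr e
  have t : w * ∑' n : ℕ, w ^ n / (n.factorial : ℂ) * (Gamma (c + 1 + 1 + n))⁻¹ =
      ∑' n : ℕ, (n : ℂ) * (w ^ n / (n.factorial : ℂ) * (Gamma (c + 1 + n))⁻¹) := by
    rw [s3.tsum_eq_zero_add, ← tsum_mul_left]
    simp only [e]
    simp
  rw [t, ← tsum_mul_left, ← s3.tsum_add (s1.mul_left c), sub_eq_zero]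
  refine tsum_congr fun n => ?_
  rw [aux_rec c n, show c + ((n + 1 : ℕ) : ℂ) = c + 1 + n by push_cast; ring]
  ring
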